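/- arXiv:1706.06516 — 4 statements merged into one kernel-verified Lean document; each statement's English description precedes it below -/
import Mathlib

section
/- Let M and H be n×n real symmetric matrices, let v^(1), …, v^(n) be an orthonormal basis of eigenvectors of M with M v^(s) = λ_s v^(s), and let ṽ^(t) be a unit eigenvector of M+H with (M+H) ṽ^(t) = λ̃_t ṽ^(t). If ‖H‖ < |λ̃_t| (spectral norm), then ṽ^(t) = Σ_{s=1}^n (λ_s/λ̃_t) ⟨ṽ^(t), v^(s)⟩ Σ_{k≥0} (H/λ̃_t)^k v^(s), where the inner Neumann series converges. -/
open Matrix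

/-- The spectral (operator) norm of a real square matrix. -/
noncomputable def specNorm {n : ℕ} (A : Matrix (Fin n) (Fin n) ℝ) : ℝ :=
  ‖Matrix.toEuclideanCLM (𝕜 := ℝ) A‖

/-!
The eigenvector equation `(M + H) x = μ x` says `(1 - μ⁻¹ H) x = μ⁻¹ M x`. As `‖μ⁻¹ H‖ < 1`, the
operator on the left is inverted by the Neumann series of `μ⁻¹ H`. On the right, expanding `x` in
eigenvectors of `M` turns `M` into multiplication of the coefficients by the eigenvalues, and the
bounded inverse can be applied term by term.
-/

section Operators

variable {𝕜 E : Type*} [NontriviallyNormedField 𝕜] [NormedAddCommGroup E] [NormedSpace 𝕜 E]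
  [CompleteSpace E]

theorem hasSum_pow_apply_of_norm_lt_one {A : E →L[𝕜] E} (hA : ‖A‖ < 1) (y : E) :
    HasSum (fun k : ℕ => (A ^ k) y) ((∑' k : ℕ, A ^ k) y) :=
  (ContinuousLinearMap.apply 𝕜 E y).hasSum (summable_geometric_of_norm_lt_one hA).hasSum

theorem tsum_pow_apply_sub_apply {A : E →L[𝕜] E} (hA : ‖A‖ < 1) (x : E) :
    (∑' k : ℕ, A ^ k) (x - A x) = x :=
  congr($(geom_series_mul_neg A hA) x)

theorem neumann_expansion_general {ι : Type*} {M H : E →L[𝕜] E} {v : ι → E} {lam c : ι → 𝕜}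
    {x : E} {μ : 𝕜} (heig : ∀ s, M (v s) = lam s • v s) (hx : HasSum (fun s => c s • v s) x)
    (hμ : (M + H) x = μ • x) (hH : ‖H‖ < ‖μ‖) :
    (∀ s, Summable fun k : ℕ => ((μ⁻¹ • H) ^ k) (v s)) ∧
      HasSum (fun s => (lam s / μ) • c s • ∑' k : ℕ, ((μ⁻¹ • H) ^ k) (v s)) x := by
  have hμ_pos : 0 < ‖μ‖ := (norm_nonneg H).trans_lt hH
  have hA : ‖μ⁻¹ • H‖ < 1 := by rwa [norm_smul, norm_inv, inv_mul_lt_one₀ hμ_pos]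
  have hseries (s : ι) := hasSum_pow_apply_of_norm_lt_one hA (v s)
  have hMx : HasSum (fun s => (lam s / μ) • c s • v s) (μ⁻¹ • M x) := by
    convert (M.hasSum hx).const_smul μ⁻¹ using 2 with s
    rw [map_smul, heig, smul_comm (c s), div_eq_inv_mul, mul_smul]
  have hres : x - (μ⁻¹ • H) x = μ⁻¹ • M x := by
    rw [_root_.smul_apply, sub_eq_iff_eq_add, ← smul_add, ← _root_.add_apply, hμ,
      inv_smul_smul₀ (norm_pos_iff.mp hμ_pos)]
  refine ⟨fun s => (hseries s).summable, ?_⟩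
  simpa only [← hres, tsum_pow_apply_sub_apply hA, map_smul, (hseries _).tsum_eq] using
    (∑' k : ℕ, (μ⁻¹ • H) ^ k).hasSum hMx

end Operators

theorem eq_sum_dotProduct_smul_of_orthonormal {ι R : Type*} [Fintype ι] [DecidableEq ι]
    [CommRing R] {v : ι → ι → R} (hv : ∀ s r, v s ⬝ᵥ v r = if s = r then 1 else 0) (w : ι → R) :
    w = ∑ s, (w ⬝ᵥ v s) • v s := by
  have hrows : of v * (of v)ᵀ = 1 := by
    ext s r
    exact (hv s r).trans one_apply.symm
  calc
    w = (of v)ᵀ *ᵥ (of v *ᵥ w) := by rw [mulVec_mulVec, mul_eq_one_comm.mp hrows, one_mulVec]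
    _ = ∑ s, (v s ⬝ᵥ w) • v s := by rw [mulVec_transpose, vecMul_eq_sum]; rfl
    _ = ∑ s, (w ⬝ᵥ v s) • v s := by simp only [dotProduct_comm w]

theorem neumann_expansion_mulVec {𝕜 ι κ : Type*} [RCLike 𝕜] [Fintype ι] [DecidableEq ι]
    [Fintype κ] {M H : Matrix ι ι 𝕜} {v : κ → ι → 𝕜} {lam c : κ → 𝕜} {x : ι → 𝕜} {μ : 𝕜}
    (heig : ∀ s, M *ᵥ v s = lam s • v s) (hx : x = ∑ s, c s • v s)
    (hμ : (M + H) *ᵥ x = μ • x) (hH : ‖toEuclideanCLM (𝕜 := 𝕜) H‖ < ‖μ‖) :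
    (∀ s, Summable fun k : ℕ => ((μ⁻¹ • H) ^ k) *ᵥ v s) ∧
      x = ∑ s, (lam s / μ) • c s • ∑' k : ℕ, ((μ⁻¹ • H) ^ k) *ᵥ v s := by
  let e := PiLp.continuousLinearEquiv 2 𝕜 (fun _ : ι => 𝕜)
  have hpow (k : ℕ) (s : κ) : ((μ⁻¹ • H) ^ k) *ᵥ v s =
      e (((μ⁻¹ • toEuclideanCLM (𝕜 := 𝕜) H) ^ k) (e.symm (v s))) := by
    rw [← map_smul, ← map_pow]
    rfl
  have heig' (s : κ) : toEuclideanCLM (𝕜 := 𝕜) M (e.symm (v s)) = lam s • e.symm (v s) :=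
    congr(e.symm $(heig s))
  have hx' : HasSum (fun s => c s • e.symm (v s)) (e.symm x) := by
    simpa only [hx, map_sum, map_smul] using hasSum_fintype fun s => c s • e.symm (v s)
  have hμ' : (toEuclideanCLM (𝕜 := 𝕜) M + toEuclideanCLM (𝕜 := 𝕜) H) (e.symm x) =
      μ • e.symm x := by
    rw [← map_add]
    exact congr(e.symm $(hμ))
  obtain ⟨hsummable, hsum⟩ := neumann_expansion_general heig' hx' hμ' hH
  refine ⟨fun s => ?_, ?_⟩
  · simpa only [hpow] using e.summable.mpr (hsummable s)
  · calc
      x = e (e.symm x) := (e.apply_symm_apply x).symm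
      _ = e (∑ s, (lam s / μ) • c s •
            ∑' k : ℕ, ((μ⁻¹ • toEuclideanCLM (𝕜 := 𝕜) H) ^ k) (e.symm (v s))) :=
          congr(e $(hsum.unique (hasSum_fintype _)))
      _ = _ := by simp only [map_sum, map_smul, e.map_tsum, hpow]

/-- The Neumann trick: expansion of a perturbed eigenvector in the unperturbed
eigenbasis. -/
theorem neumann_expansion {n : ℕ} (M H : Matrix (Fin n) (Fin n) ℝ)
    (hM : M.IsSymm) (hH : H.IsSymm)
    (lam : Fin n → ℝ) (v : Fin n → (Fin n → ℝ))
    (hON : ∀ s r, v s ⬝ᵥ v r = if s = r then (1 : ℝ) else 0)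
    (heig : ∀ s, M.mulVec (v s) = lam s • v s)
    (tlam : ℝ) (tv : Fin n → ℝ) (htv : tv ⬝ᵥ tv = 1)
    (hteig : (M + H).mulVec tv = tlam • tv)
    (hnorm : specNorm H < |tlam|) :
    (∀ s, Summable fun k : ℕ => ((tlam⁻¹ • H) ^ k).mulVec (v s)) ∧
      tv = ∑ s, (lam s / tlam) • (tv ⬝ᵥ v s) •
        ∑' k : ℕ, ((tlam⁻¹ • H) ^ k).mulVec (v s) :=
  neumann_expansion_mulVec heig (eq_sum_dotProduct_smul_of_orthonormal hON tv) hteig hnorm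
end

section
/- Let X and Y be n×d real matrices (d ≤ n) whose columns are orthonormal, and let 0 ≤ δ ≤ 1. Suppose every singular value σ of the d×d matrix XᵀY satisfies σ ≥ √(1 − δ²) (equivalently, the sine of every principal angle between the column spaces of X and Y is at most δ). Then there exists an n×d real matrix X̂ with orthonormal columns x̂_1, …, x̂_d satisfying X̂ X̂ᵀ = X Xᵀ (so the columns of X̂ form an orthonormal basis of the column space of X) such that, writing y_1, …, y_d for the columns of Y: ⟨x̂_i, y_i⟩ ≥ 1 − δ² for every i, and |⟨x̂_i, y_j⟩| ≤ δ² whenever i ≠ j. -/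
open Matrix

/-!
Write the polar decomposition `Xᴴ Y = U P`, with `U` unitary and `P = |Xᴴ Y|`, and take `X̂ = X U`:
it spans the same column space as `X`, and `X̂ᴴ Y = P`. The singular values of `Xᴴ Y` are the
eigenvalues of `P` and lie in `[c, 1]`, so `c • 1 ≤ P ≤ 1`. Comparing diagonals gives `c ≤ P i i`.
Off the diagonal `P`, `P - c • 1` and `1 - P` agree up to sign, and the modulus of an entry of a
positive semidefinite matrix is at most the mean of the two corresponding diagonal entries; adding
the bounds from `P - c • 1` and `1 - P` gives `2 ‖P i j‖ ≤ 1 - c`.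
-/

section PolarDecomposition

variable {𝕜 : Type*} [RCLike 𝕜]

theorem exists_linearIsometryEquiv_comp_eq_of_norm_eq {V W : Type*} [AddCommGroup V] [Module 𝕜 V]
    [NormedAddCommGroup W] [InnerProductSpace 𝕜 W] [FiniteDimensional 𝕜 W] {S T : V →ₗ[𝕜] W}
    (h : ∀ x, ‖S x‖ = ‖T x‖) :
    ∃ L : W ≃ₗᵢ[𝕜] W, L.toLinearEquiv.toLinearMap ∘ₗ S = T := by
  obtain ⟨g, hg⟩ := S.rangeRestrict.exists_rightInverse_of_surjective S.range_rangeRestrict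
  have hSg (y : S.range) : S (g y) = y := congrArg Subtype.val (LinearMap.congr_fun hg y)
  let L₀ : S.range →ₗᵢ[𝕜] W :=
    { toLinearMap := T ∘ₗ g
      norm_map' := fun y ↦ by rw [LinearMap.comp_apply, ← h, hSg, Submodule.coe_norm] }
  refine ⟨L₀.extend.toLinearIsometryEquiv rfl, LinearMap.ext fun x ↦ ?_⟩
  have hT : T (g (S.rangeRestrict x) - x) = 0 := by
    rw [← norm_eq_zero, ← h, map_sub, hSg, norm_eq_zero]
    exact sub_self (S x)
  calc L₀.extend (S x) = T (g (S.rangeRestrict x)) := L₀.extend_apply (S.rangeRestrict x)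
    _ = T x := by rwa [map_sub, sub_eq_zero] at hT

variable {m n : Type*} [Fintype m]

theorem norm_toEuclideanLin_eq_of_conjTranspose_mul_self_eq [Fintype n] [DecidableEq n]
    {A B : Matrix m n 𝕜} (h : Aᴴ * A = Bᴴ * B) (x : EuclideanSpace 𝕜 n) :
    ‖toEuclideanLin A x‖ = ‖toEuclideanLin B x‖ := by
  classical
  have norm_sq (M : Matrix m n 𝕜) :
      (‖toEuclideanLin M x‖ : 𝕜) ^ 2 = inner 𝕜 (toEuclideanLin (Mᴴ * M) x) x := by
    rw [← inner_self_eq_norm_sq_to_K, ← LinearMap.adjoint_inner_left,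
      ← toEuclideanLin_conjTranspose_eq_adjoint, toLpLin_mul (q := 2), LinearMap.comp_apply]
  rw [← sq_eq_sq₀ (norm_nonneg _) (norm_nonneg _), ← RCLike.ofReal_inj (K := 𝕜),
    RCLike.ofReal_pow, RCLike.ofReal_pow, norm_sq, norm_sq, h]

theorem exists_unitary_mul_eq_of_conjTranspose_mul_self_eq [DecidableEq m] [Finite n]
    {A B : Matrix m n 𝕜} (h : Aᴴ * A = Bᴴ * B) : ∃ U ∈ unitaryGroup m 𝕜, U * A = B := by
  classical
  cases nonempty_fintype n
  obtain ⟨L, hL⟩ := exists_linearIsometryEquiv_comp_eq_of_norm_eq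
    (norm_toEuclideanLin_eq_of_conjTranspose_mul_self_eq h)
  let b := EuclideanSpace.basisFun m 𝕜
  refine ⟨toEuclideanLin.symm L.toLinearEquiv.toLinearMap, L.toMatrix_mem_unitaryGroup b b, ?_⟩
  apply toEuclideanLin.injective
  rw [toLpLin_mul (q := 2), LinearEquiv.apply_symm_apply, hL]

open scoped MatrixOrder ComplexOrder

theorem exists_unitary_mul_cfcAbs_eq [DecidableEq m] (A : Matrix m m 𝕜) :
    ∃ U ∈ unitaryGroup m 𝕜, U * CFC.abs A = A := by
  apply exists_unitary_mul_eq_of_conjTranspose_mul_self_eq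
  rw [(CFC.abs_nonneg A).posSemidef.isHermitian.eq, CFC.abs_mul_abs, star_eq_conjTranspose]

end PolarDecomposition

section LoewnerOrder

open scoped MatrixOrder ComplexOrder

variable {𝕜 n : Type*} [RCLike 𝕜]

theorem norm_apply_sq_le_of_posSemidef {M : Matrix n n 𝕜} (hM : M.PosSemidef) (i j : n) :
    ‖M i j‖ ^ 2 ≤ RCLike.re (M i i) * RCLike.re (M j j) := by
  have hdet := (hM.submatrix ![i, j]).det_nonneg
  simp only [det_fin_two, submatrix_apply, cons_val_zero, cons_val_one] at hdet
  rw [← hM.isHermitian.apply j i, RCLike.star_def, RCLike.mul_conj,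
    ← hM.isHermitian.coe_re_apply_self i, ← hM.isHermitian.coe_re_apply_self j] at hdet
  norm_cast at hdet
  exact sub_nonneg.mp hdet

theorem two_mul_norm_apply_le_of_posSemidef {M : Matrix n n 𝕜} (hM : M.PosSemidef) (i j : n) :
    2 * ‖M i j‖ ≤ RCLike.re (M i i) + RCLike.re (M j j) := by
  have diag_nonneg (k : n) : 0 ≤ RCLike.re (M k k) := (RCLike.nonneg_iff.mp hM.diag_nonneg).1
  refine le_of_sq_le_sq ?_ (add_nonneg (diag_nonneg i) (diag_nonneg j))
  nlinarith [norm_apply_sq_le_of_posSemidef hM i j,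
    sq_nonneg (RCLike.re (M i i) - RCLike.re (M j j))]

theorem conjTranspose_mul_mul_le [Finite n] {m : Type*} [Fintype m] {A B : Matrix m m 𝕜} (h : A ≤ B)
    (C : Matrix m n 𝕜) : Cᴴ * A * C ≤ Cᴴ * B * C := by
  simpa only [le_iff, Matrix.mul_sub, Matrix.sub_mul] using
    (le_iff.mp h).conjTranspose_mul_mul_same C

variable [Fintype n] [DecidableEq n]

theorem mul_conjTranspose_le_one_of_conjTranspose_mul_eq_one {m : Type*} [Fintype m]
    [DecidableEq m] {X : Matrix m n 𝕜} (hX : Xᴴ * X = 1) : X * Xᴴ ≤ 1 := by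
  have hproj : IsStarProjection (X * Xᴴ) :=
    { isIdempotentElem := by
        rw [IsIdempotentElem, Matrix.mul_assoc, ← Matrix.mul_assoc Xᴴ, hX, Matrix.one_mul]
      isSelfAdjoint := isHermitian_mul_conjTranspose_self X }
  exact hproj.le_one

theorem le_re_apply_self_of_algebraMap_le {a : ℝ} {P : Matrix n n 𝕜}
    (h : algebraMap ℝ _ a ≤ P) (i : n) : a ≤ RCLike.re (P i i) := by
  have hdiag := (RCLike.nonneg_iff.mp ((le_iff.mp h).diag_nonneg (i := i))).1
  simpa [algebraMap_matrix_apply] using hdiag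

theorem norm_apply_le_of_algebraMap_le_of_le {a b : ℝ} {P : Matrix n n 𝕜}
    (ha : algebraMap ℝ _ a ≤ P) (hb : P ≤ algebraMap ℝ _ b) {i j : n} (hij : i ≠ j) :
    ‖P i j‖ ≤ (b - a) / 2 := by
  have lower := two_mul_norm_apply_le_of_posSemidef (le_iff.mp ha) i j
  have upper := two_mul_norm_apply_le_of_posSemidef (le_iff.mp hb) i j
  simp only [Matrix.sub_apply, algebraMap_matrix_apply, hij, ↓reduceIte, sub_zero, zero_sub,
    norm_neg, map_sub, RCLike.algebraMap_eq_ofReal, RCLike.ofReal_re] at lower upper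
  linarith

theorem cfcAbs_eq_cfc_sqrt (A : Matrix n n 𝕜) : CFC.abs A = cfc Real.sqrt (Aᴴ * A) := by
  rw [CFC.abs, CFC.sqrt_eq_real_sqrt _ (star_mul_self_nonneg A), cfcₙ_eq_cfc,
    star_eq_conjTranspose]

theorem cfcAbs_le_one {A : Matrix n n 𝕜} (h : Aᴴ * A ≤ 1) : CFC.abs A ≤ 1 := by
  rw [← map_one (algebraMap ℝ (Matrix n n 𝕜)), le_algebraMap_iff_spectrum_le
    (ha := isHermitian_conjTranspose_mul_self A)] at h
  rw [cfcAbs_eq_cfc_sqrt]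
  exact cfc_le_one _ _ fun x hx ↦ Real.sqrt_le_one.mpr (h x hx)

theorem algebraMap_le_cfcAbs {A : Matrix n n 𝕜} (hA : (Aᴴ * A).IsHermitian) {c : ℝ}
    (h : ∀ i, c ≤ √(hA.eigenvalues i)) : algebraMap ℝ _ c ≤ CFC.abs A := by
  rw [cfcAbs_eq_cfc_sqrt]
  refine algebraMap_le_cfc _ _ _ ?_
  rwa [hA.spectrum_real_eq_range_eigenvalues, Set.forall_mem_range]

end LoewnerOrder

open scoped MatrixOrder in
theorem aligned_basis_of_small_principal_angles_general {𝕜 m n : Type*} [RCLike 𝕜]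
    [Fintype m] [Fintype n] [DecidableEq n] (X Y : Matrix m n 𝕜)
    (hX : Xᴴ * X = 1) (hY : Yᴴ * Y = 1) (c : ℝ)
    (hA : ((Xᴴ * Y)ᴴ * (Xᴴ * Y)).IsHermitian) (hsv : ∀ i, c ≤ √(hA.eigenvalues i)) :
    ∃ Xh : Matrix m n 𝕜,
      Xhᴴ * Xh = 1 ∧ Xh * Xhᴴ = X * Xᴴ ∧
      (∀ i, c ≤ RCLike.re ((Xhᴴ * Y) i i)) ∧
      (∀ i j, i ≠ j → ‖(Xhᴴ * Y) i j‖ ≤ (1 - c) / 2) := by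
  classical
  obtain ⟨U, hU, hUP⟩ := exists_unitary_mul_cfcAbs_eq (Xᴴ * Y)
  set P := CFC.abs (Xᴴ * Y)
  have hUU : Uᴴ * U = 1 := mem_unitaryGroup_iff'.mp hU
  have hUU' : U * Uᴴ = 1 := mem_unitaryGroup_iff.mp hU
  have hXhY : (X * U)ᴴ * Y = P := by
    rw [conjTranspose_mul, Matrix.mul_assoc, ← hUP, ← Matrix.mul_assoc, hUU, Matrix.one_mul]
  have hcP : algebraMap ℝ _ c ≤ P := algebraMap_le_cfcAbs hA hsv
  have hP1 : P ≤ algebraMap ℝ _ 1 := by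
    rw [map_one]
    apply cfcAbs_le_one
    simpa [Matrix.mul_assoc, hY] using
      conjTranspose_mul_mul_le (mul_conjTranspose_le_one_of_conjTranspose_mul_eq_one hX) Y
  refine ⟨X * U, ?_, ?_, ?_, ?_⟩
  · rw [conjTranspose_mul, Matrix.mul_assoc, ← Matrix.mul_assoc Xᴴ, hX, Matrix.one_mul, hUU]
  · rw [conjTranspose_mul, Matrix.mul_assoc, ← Matrix.mul_assoc U, hUU', Matrix.one_mul]
  · rw [hXhY]
    exact le_re_apply_self_of_algebraMap_le hcP
  · rw [hXhY]
    exact fun i j ↦ norm_apply_le_of_algebraMap_le_of_le hcP hP1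

theorem le_sqrt_self_of_le_one {x : ℝ} (hx : x ≤ 1) : x ≤ √x := by
  rcases le_total 0 x with h | h
  · exact Real.le_sqrt_of_sq_le (pow_le_of_le_one h hx two_ne_zero)
  · exact h.trans (Real.sqrt_nonneg _)

/-- Alignment of orthonormal bases of two subspaces whose principal angles are
all small: if every singular value of `XᵀY` is at least `√(1-δ²)`, there is an
orthonormal basis `X̂` of the column space of `X` whose columns are aligned with
the columns of `Y`. -/
theorem aligned_basis_of_small_principal_angles {n d : ℕ} (hdn : d ≤ n)
    (X Y : Matrix (Fin n) (Fin d) ℝ)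
    (hX : Xᵀ * X = 1) (hY : Yᵀ * Y = 1)
    (δ : ℝ) (hδ0 : 0 ≤ δ) (hδ1 : δ ≤ 1)
    (hA : ((Xᵀ * Y)ᵀ * (Xᵀ * Y)).IsHermitian)
    (hsv : ∀ i, Real.sqrt (1 - δ ^ 2) ≤ Real.sqrt (hA.eigenvalues i)) :
    ∃ Xh : Matrix (Fin n) (Fin d) ℝ,
      Xhᵀ * Xh = 1 ∧ Xh * Xhᵀ = X * Xᵀ ∧
      (∀ i, 1 - δ ^ 2 ≤ Xhᵀ i ⬝ᵥ Yᵀ i) ∧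
      (∀ i j, i ≠ j → |Xhᵀ i ⬝ᵥ Yᵀ j| ≤ δ ^ 2) := by
  obtain ⟨Xh, horth, hrange, hdiag, hoff⟩ :=
    aligned_basis_of_small_principal_angles_general X Y hX hY √(1 - δ ^ 2) hA hsv
  have hδ := le_sqrt_self_of_le_one (sub_le_self 1 (sq_nonneg δ))
  exact ⟨Xh, horth, hrange, fun i ↦ hδ.trans (hdiag i),
    fun i j hij ↦ (hoff i j hij).trans (by linarith [sq_nonneg δ])⟩
end

section
/- (Davis–Kahan for statisticians.) Let M and H be n×n real symmetric matrices with eigenvalues λ_1 ≥ ⋯ ≥ λ_n for M and λ̃_1 ≥ ⋯ ≥ λ̃_n for M+H. Fix 1 ≤ r ≤ s ≤ n, set δ = min(λ_{r−1} − λ_r, λ_s − λ_{s+1}) (with the conventions λ_0 = +∞ and λ_{n+1} = −∞) and assume δ > 0. Let d = s − r + 1, and let U = (v^(r), …, v^(s)) and Ũ = (ṽ^(r), …, ṽ^(s)) be n×d matrices with orthonormal columns such that M v^(i) = λ_i v^(i) and (M+H) ṽ^(i) = λ̃_i ṽ^(i) for all i ∈ {r, …, s}. Then √( d − ‖Uᵀ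 Ũ‖_F² ) ≤ 2 √d · ‖H‖ / δ, where the left-hand side equals the Frobenius norm of sin Θ(U, Ũ), the diagonal matrix of sines of the principal angles between the column spaces of U and Ũ. -/
open Matrix

/-!
Let `S` be the set of selected indices. For a unit eigenvector `v` of the perturbed operator `B`,
with eigenvalue `μ_j` for some `j ∈ S`, the residual `A v - λ_j v = (μ_j - λ_j) v - (B - A) v` has
norm at most `2 ‖B - A‖`, because `|μ_j - λ_j| ≤ ‖B - A‖` by Weyl's inequality. In an eigenbasis of
`A` its coordinates are `(λ_k - λ_j) ⟪b_k, v⟫`, so it has norm at least `δ` times the norm of the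
component of `v` orthogonal to the `b_k` with `k ∈ S`. Squaring and summing over `j ∈ S` gives the
bound.
-/

open Module WithLp
open scoped InnerProductSpace

section InnerProductSpace

variable {𝕜 E ι : Type*} [RCLike 𝕜] [NormedAddCommGroup E] [InnerProductSpace 𝕜 E] [Fintype ι]
  {A B : E →L[𝕜] E} {b c : OrthonormalBasis ι 𝕜 E} {lam mu : ι → ℝ} {δ : ℝ}

/-- The orthonormal basis `b` diagonalizes `A`, with the real eigenvalues `lam` listed in the order
of the basis vectors. -/
def IsEigenbasis (A : E →L[𝕜] E) (b : OrthonormalBasis ι 𝕜 E) (lam : ι → ℝ) : Prop :=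
  ∀ i, A (b i) = (lam i : 𝕜) • b i

namespace IsEigenbasis

lemma inner_apply (hA : IsEigenbasis A b lam) (k : ι) (x : E) :
    ⟪b k, A x⟫_𝕜 = lam k * ⟪b k, x⟫_𝕜 := by
  classical
  conv_lhs => rw [← b.sum_repr' x]
  simp [hA _, inner_sum, inner_smul_right, b.inner_eq_ite, mul_comm]

lemma re_inner_apply_self (hA : IsEigenbasis A b lam) (x : E) :
    RCLike.re ⟪x, A x⟫_𝕜 = ∑ k, lam k * ‖⟪b k, x⟫_𝕜‖ ^ 2 := by
  rw [← b.sum_inner_mul_inner, map_sum]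
  refine Finset.sum_congr rfl fun k _ => ?_
  rw [hA.inner_apply, mul_left_comm, RCLike.re_ofReal_mul, inner_mul_symm_re_eq_norm, norm_mul,
    norm_inner_symm, sq]

lemma mul_norm_sq_le_re_inner {a : ℝ} {x : E} (hA : IsEigenbasis A b lam)
    (hx : ∀ k, lam k < a → ⟪b k, x⟫_𝕜 = 0) : a * ‖x‖ ^ 2 ≤ RCLike.re ⟪x, A x⟫_𝕜 := by
  rw [hA.re_inner_apply_self, ← b.sum_sq_norm_inner_right x, Finset.mul_sum]
  refine Finset.sum_le_sum fun k _ => ?_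
  rcases lt_or_ge (lam k) a with hk | hk
  · simp [hx k hk]
  · gcongr

lemma re_inner_le_mul_norm_sq {a : ℝ} {x : E} (hA : IsEigenbasis A b lam)
    (hx : ∀ k, a < lam k → ⟪b k, x⟫_𝕜 = 0) : RCLike.re ⟪x, A x⟫_𝕜 ≤ a * ‖x‖ ^ 2 := by
  rw [hA.re_inner_apply_self, ← b.sum_sq_norm_inner_right x, Finset.mul_sum]
  refine Finset.sum_le_sum fun k _ => ?_
  rcases lt_or_ge a (lam k) with hk | hk
  · simp [hx k hk]
  · gcongr

lemma inner_eq_zero_of_ne (hA : IsEigenbasis A b lam) {k : ι} {a : ℝ} {x : E}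
    (hx : A x = (a : 𝕜) • x) (hk : lam k ≠ a) : ⟪b k, x⟫_𝕜 = 0 := by
  have h : (lam k : 𝕜) * ⟪b k, x⟫_𝕜 = a * ⟪b k, x⟫_𝕜 := by
    rw [← hA.inner_apply, hx, inner_smul_right]
  exact (mul_eq_mul_right_iff.mp h).resolve_left (RCLike.ofReal_inj.not.mpr hk)

lemma exists_extension {S : Set ι} {u : S → E} (hA : IsEigenbasis A b lam)
    (hu : Orthonormal 𝕜 u) (hAu : ∀ i, A (u i) = (lam i : 𝕜) • u i)
    (hS : ∀ i ∈ S, ∀ k ∉ S, lam k ≠ lam i) :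
    ∃ c : OrthonormalBasis ι 𝕜 E, IsEigenbasis A c lam ∧ ∀ i : S, c i = u i := by
  classical
  let w : ι → E := fun k => if hk : k ∈ S then u ⟨k, hk⟩ else b k
  have hub (i : S) (k : ι) (hk : k ∉ S) : ⟪b k, u i⟫_𝕜 = 0 :=
    hA.inner_eq_zero_of_ne (hAu i) (hS i i.2 k hk)
  have hw : Orthonormal 𝕜 w := by
    rw [orthonormal_iff_ite] at hu ⊢
    intro i k
    by_cases hi : i ∈ S <;> by_cases hk : k ∈ S
    · simp [w, hi, hk, hu]
    · simp [w, hi, hk, inner_eq_zero_symm.mp (hub ⟨i, hi⟩ k hk), ne_of_mem_of_not_mem hi hk]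
    · simp [w, hi, hk, hub ⟨k, hk⟩ i hi, (ne_of_mem_of_not_mem hk hi).symm]
    · simp [w, hi, hk, b.inner_eq_ite]
  have hAw (k : ι) : A (w k) = (lam k : 𝕜) • w k := by
    by_cases hk : k ∈ S
    · simp [w, hk, hAu]
    · simp [w, hk, hA k]
  have := b.toBasis.finiteDimensional_of_finite
  have hspan := hw.linearIndependent.span_eq_top_of_card_eq_finrank'
    (finrank_eq_card_basis b.toBasis).symm
  refine ⟨OrthonormalBasis.mk hw hspan.ge, fun k => ?_, fun i => ?_⟩
  · rw [OrthonormalBasis.coe_mk, hAw]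
  · simp [w]

lemma gap_sq_mul_le_norm_sub_sq {S : Set ι} [Fintype S] {a : ℝ} (hA : IsEigenbasis A b lam)
    (hδ : 0 ≤ δ) (hgap : ∀ k ∉ S, δ ≤ |lam k - a|) (x : E) :
    δ ^ 2 * (‖x‖ ^ 2 - ∑ i : S, ‖⟪b i, x⟫_𝕜‖ ^ 2) ≤ ‖A x - (a : 𝕜) • x‖ ^ 2 := by
  classical
  have hsplit (f : ι → ℝ) : ∑ i : S, f i + ∑ k : {k // k ∉ S}, f k = ∑ k, f k := by
    convert! Fintype.sum_subtype_add_sum_subtype (· ∈ S) f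
  have hcoord (k : ι) : ‖⟪b k, A x - (a : 𝕜) • x⟫_𝕜‖ ^ 2 =
      |lam k - a| ^ 2 * ‖⟪b k, x⟫_𝕜‖ ^ 2 := by
    rw [inner_sub_right, hA.inner_apply, inner_smul_right, ← sub_mul, norm_mul, mul_pow,
      ← RCLike.ofReal_sub, RCLike.norm_ofReal]
  calc δ ^ 2 * (‖x‖ ^ 2 - ∑ i : S, ‖⟪b i, x⟫_𝕜‖ ^ 2)
      = ∑ k : {k // k ∉ S}, δ ^ 2 * ‖⟪b k, x⟫_𝕜‖ ^ 2 := by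
        rw [← b.sum_sq_norm_inner_right x, ← hsplit, add_sub_cancel_left, Finset.mul_sum]
    _ ≤ ∑ k : {k // k ∉ S}, |lam k - a| ^ 2 * ‖⟪b k, x⟫_𝕜‖ ^ 2 := by
        gcongr with k
        exact hgap k k.2
    _ ≤ ∑ k, |lam k - a| ^ 2 * ‖⟪b k, x⟫_𝕜‖ ^ 2 := by
        rw [← hsplit]
        exact le_add_of_nonneg_left (by positivity)
    _ = ‖A x - (a : 𝕜) • x‖ ^ 2 := by
        simp_rw [← hcoord, b.sum_sq_norm_inner_right]

end IsEigenbasis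

lemma exists_ne_zero_forall_inner_eq_zero {κ : Type*} [Fintype κ]
    (v : κ → E) (hκ : Fintype.card κ < finrank 𝕜 E) : ∃ x ≠ 0, ∀ k, ⟪v k, x⟫_𝕜 = 0 := by
  have := FiniteDimensional.of_finrank_pos (Nat.zero_lt_of_lt hκ)
  let f : E →ₗ[𝕜] κ → 𝕜 := LinearMap.pi fun k => innerₛₗ 𝕜 (v k)
  have hf : LinearMap.ker f ≠ ⊥ := LinearMap.ker_ne_bot_of_finrank_lt (by simpa using hκ)
  obtain ⟨x, hfx, hx⟩ := Submodule.exists_mem_ne_zero_of_ne_bot hf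
  exact ⟨x, hx, fun k => congrFun hfx k⟩

section Weyl

variable [LinearOrder ι]

lemma le_add_opNorm_sub_of_isEigenbasis (hA : IsEigenbasis A b lam) (hB : IsEigenbasis B c mu)
    (hlam : Antitone lam) (hmu : Antitone mu) (j : ι) : lam j ≤ mu j + ‖B - A‖ := by
  have hcard : Fintype.card {k // k ≠ j} < finrank 𝕜 E := by
    rw [finrank_eq_card_basis b.toBasis]
    exact Fintype.card_subtype_lt (x := j) (by simp)
  -- Both quadratic forms are controlled at a common vector orthogonal to the `c k` with `k < j` and
  -- the `b k` with `j < k`, which exists because these are one vector short of the dimension.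
  obtain ⟨x, hx, hinner⟩ := exists_ne_zero_forall_inner_eq_zero (𝕜 := 𝕜)
    (fun k : {k // k ≠ j} => if k < j then c k else b k) hcard
  have hlower : lam j * ‖x‖ ^ 2 ≤ RCLike.re ⟪x, A x⟫_𝕜 :=
    hA.mul_norm_sq_le_re_inner fun k hk => by
      have hjk : j < k := hlam.reflect_lt hk
      simpa [hjk.not_gt] using hinner ⟨k, hjk.ne'⟩
  have hupper : RCLike.re ⟪x, B x⟫_𝕜 ≤ mu j * ‖x‖ ^ 2 :=
    hB.re_inner_le_mul_norm_sq fun k hk => by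
      have hkj : k < j := hmu.reflect_lt hk
      simpa [hkj] using hinner ⟨k, hkj.ne⟩
  have hpert : -(‖B - A‖ * ‖x‖ ^ 2) ≤ RCLike.re ⟪x, (B - A) x⟫_𝕜 := by
    refine neg_le_of_abs_le ((RCLike.abs_re_le_norm _).trans ((norm_inner_le_norm _ _).trans ?_))
    calc ‖x‖ * ‖(B - A) x‖ ≤ ‖x‖ * (‖B - A‖ * ‖x‖) := by gcongr; exact (B - A).le_opNorm x
      _ = ‖B - A‖ * ‖x‖ ^ 2 := by ring
  rw [_root_.sub_apply, inner_sub_right, map_sub] at hpert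
  refine le_of_mul_le_mul_right ?_ (by positivity : 0 < ‖x‖ ^ 2)
  linarith

lemma abs_sub_le_opNorm_sub_of_isEigenbasis (hA : IsEigenbasis A b lam) (hB : IsEigenbasis B c mu)
    (hlam : Antitone lam) (hmu : Antitone mu) (j : ι) : |mu j - lam j| ≤ ‖B - A‖ := by
  have hle := le_add_opNorm_sub_of_isEigenbasis hA hB hlam hmu j
  have hge := le_add_opNorm_sub_of_isEigenbasis hB hA hmu hlam j
  rw [norm_sub_rev] at hge
  exact abs_sub_le_iff.mpr ⟨by linarith, by linarith⟩

end Weyl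

lemma norm_apply_sub_smul_le {l m : ℝ} {x : E} (hBx : B x = (m : 𝕜) • x)
    (hlm : |m - l| ≤ ‖B - A‖) : ‖A x - (l : 𝕜) • x‖ ≤ 2 * ‖B - A‖ * ‖x‖ := by
  have hres : A x - (l : 𝕜) • x = ((m - l : ℝ) : 𝕜) • x - (B - A) x := by
    rw [_root_.sub_apply, hBx, RCLike.ofReal_sub, sub_smul]
    abel
  calc ‖A x - (l : 𝕜) • x‖ ≤ ‖((m - l : ℝ) : 𝕜) • x‖ + ‖(B - A) x‖ := hres ▸ norm_sub_le _ _
    _ ≤ ‖B - A‖ * ‖x‖ + ‖B - A‖ * ‖x‖ := by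
      gcongr
      · rw [norm_smul, RCLike.norm_ofReal]
        gcongr
      · exact (B - A).le_opNorm x
    _ = 2 * ‖B - A‖ * ‖x‖ := by ring

theorem davis_kahan_statisticians_general [LinearOrder ι] {S : Set ι} [Fintype S] {u v : S → E}
    (hA : IsEigenbasis A b lam) (hB : IsEigenbasis B c mu) (hlam : Antitone lam)
    (hmu : Antitone mu) (hδ : 0 < δ) (hgap : ∀ i ∈ S, ∀ k ∉ S, δ ≤ |lam k - lam i|)
    (hu : Orthonormal 𝕜 u) (hv : ∀ j, ‖v j‖ = 1)
    (hAu : ∀ i, A (u i) = (lam i : 𝕜) • u i) (hBv : ∀ j, B (v j) = (mu j : 𝕜) • v j) :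
    √(Fintype.card S - ∑ i, ∑ j, ‖⟪u i, v j⟫_𝕜‖ ^ 2) ≤
      2 * √(Fintype.card S) * ‖B - A‖ / δ := by
  have hne : ∀ i ∈ S, ∀ k ∉ S, lam k ≠ lam i := fun i hi k hk =>
    sub_ne_zero.mp (abs_pos.mp (hδ.trans_le (hgap i hi k hk)))
  obtain ⟨e, he, heu⟩ := hA.exists_extension hu hAu hne
  have hcol (j : S) : δ ^ 2 * (1 - ∑ i, ‖⟪u i, v j⟫_𝕜‖ ^ 2) ≤ (2 * ‖B - A‖) ^ 2 := by
    have hweyl := abs_sub_le_opNorm_sub_of_isEigenbasis hA hB hlam hmu j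
    calc δ ^ 2 * (1 - ∑ i, ‖⟪u i, v j⟫_𝕜‖ ^ 2) ≤ ‖A (v j) - (lam j : 𝕜) • v j‖ ^ 2 := by
          simpa [heu, hv] using he.gap_sq_mul_le_norm_sub_sq hδ.le (hgap j j.2) (v j)
      _ ≤ (2 * ‖B - A‖) ^ 2 := by
          gcongr
          simpa [hv] using norm_apply_sub_smul_le (hBv j) hweyl
  have hsum : δ ^ 2 * (Fintype.card S - ∑ i, ∑ j, ‖⟪u i, v j⟫_𝕜‖ ^ 2) ≤
      Fintype.card S * (2 * ‖B - A‖) ^ 2 := by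
    rw [Finset.sum_comm]
    simpa [Finset.mul_sum, mul_sub, mul_comm] using
      Finset.sum_le_sum fun j (_ : j ∈ Finset.univ) => hcol j
  refine Real.sqrt_le_iff.mpr ⟨by positivity, ?_⟩
  rw [div_pow, le_div_iff₀ (by positivity), mul_comm]
  refine hsum.trans_eq ?_
  rw [mul_pow, mul_pow, mul_pow, Real.sq_sqrt (by positivity)]
  ring

end InnerProductSpace

section Matrix

variable {𝕜 n κ : Type*} [RCLike 𝕜] [Fintype n]

lemma toEuclideanCLM_toLp_eq_smul_iff [DecidableEq n] {A : Matrix n n 𝕜} {x : n → 𝕜} {a : 𝕜} :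
    toEuclideanCLM (𝕜 := 𝕜) A (toLp 2 x) = a • toLp 2 x ↔ A *ᵥ x = a • x := by
  rw [toEuclideanCLM_toLp, ← toLp_smul, (toLp_injective 2).eq_iff]

lemma conjTranspose_mul_apply_eq_inner {κ' : Type*} (U : Matrix n κ 𝕜) (V : Matrix n κ' 𝕜)
    (i : κ) (j : κ') :
    (Uᴴ * V) i j = ⟪toLp 2 (U.col i), toLp 2 (V.col j)⟫_𝕜 := by
  rw [EuclideanSpace.inner_toLp_toLp, dotProduct_comm]
  rfl

lemma orthonormal_col_iff [DecidableEq κ] {U : Matrix n κ 𝕜} :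
    Orthonormal 𝕜 (fun i => toLp 2 (U.col i)) ↔ Uᴴ * U = 1 := by
  simp_rw [orthonormal_iff_ite, ← conjTranspose_mul_apply_eq_inner, ← Matrix.ext_iff, one_apply]

lemma exists_isEigenbasis_of_mulVec_eq_smul [DecidableEq n] {A : Matrix n n 𝕜} {lam : n → ℝ}
    (h : ∃ w : n → n → 𝕜, (∀ i j, star (w i) ⬝ᵥ w j = if i = j then 1 else 0) ∧
      ∀ i, A *ᵥ w i = (lam i : 𝕜) • w i) :
    ∃ b : OrthonormalBasis n 𝕜 (EuclideanSpace 𝕜 n),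
      IsEigenbasis (toEuclideanCLM (𝕜 := 𝕜) A) b lam := by
  obtain ⟨w, hw, hAw⟩ := h
  have hw' : Orthonormal 𝕜 fun i => toLp 2 (w i) := by
    simpa [orthonormal_iff_ite, EuclideanSpace.inner_toLp_toLp, dotProduct_comm] using hw
  have hspan := hw'.linearIndependent.span_eq_top_of_card_eq_finrank' finrank_euclideanSpace.symm
  refine ⟨OrthonormalBasis.mk hw' hspan.ge, fun i => ?_⟩
  rw [OrthonormalBasis.coe_mk]
  exact toEuclideanCLM_toLp_eq_smul_iff.mpr (hAw i)

end Matrix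

lemma le_abs_sub_of_gap_Icc {n : ℕ} {r s : Fin n} {lam : Fin n → ℝ} {δ : ℝ} (hlam : Antitone lam)
    (hr : ∀ i : Fin n, (i : ℕ) + 1 = r → δ ≤ lam i - lam r)
    (hs : ∀ i : Fin n, (i : ℕ) = s + 1 → δ ≤ lam s - lam i) :
    ∀ j ∈ Set.Icc r s, ∀ k ∉ Set.Icc r s, δ ≤ |lam k - lam j| := by
  intro j hj k hk
  have hjr : lam j ≤ lam r := hlam hj.1
  have hjs : lam s ≤ lam j := hlam hj.2
  rcases lt_or_ge k r with hkr | hrk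
  · have hpred := hr ⟨r - 1, by omega⟩ (Nat.sub_add_cancel (Nat.one_le_of_lt hkr))
    have hk_pred : lam ⟨r - 1, by omega⟩ ≤ lam k :=
      hlam (Fin.le_def.mpr (Nat.le_sub_one_of_lt hkr))
    exact le_abs.mpr (.inl (by linarith))
  · have hsk : s < k := not_le.mp fun hks => hk ⟨hrk, hks⟩
    have hsucc := hs ⟨s + 1, by omega⟩ rfl
    have hk_succ : lam k ≤ lam ⟨s + 1, by omega⟩ := hlam (Fin.le_def.mpr (Nat.succ_le_of_lt hsk))
    exact le_abs.mpr (.inr (by linarith))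

/-- Davis–Kahan theorem for statisticians: with `δ = min(λ_{r-1} - λ_r, λ_s - λ_{s+1}) > 0`
(conventions `λ_0 = ∞`, `λ_{n+1} = -∞`), the Frobenius norm of the sines of the principal
angles between the eigenspaces `U` and `Ũ` is at most `2 √d ‖H‖ / δ`. -/
theorem davis_kahan_statisticians {n : ℕ} (M H : Matrix (Fin n) (Fin n) ℝ)
    (hM : M.IsSymm) (hH : H.IsSymm)
    (lam tlam : Fin n → ℝ) (hlam : Antitone lam) (htlam : Antitone tlam)
    (hMspec : ∃ w : Fin n → (Fin n → ℝ),
      (∀ i j, w i ⬝ᵥ w j = if i = j then (1 : ℝ) else 0) ∧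
      ∀ i, M.mulVec (w i) = lam i • w i)
    (hMHspec : ∃ w : Fin n → (Fin n → ℝ),
      (∀ i j, w i ⬝ᵥ w j = if i = j then (1 : ℝ) else 0) ∧
      ∀ i, (M + H).mulVec (w i) = tlam i • w i)
    (r s : Fin n) (hrs : r ≤ s)
    (δ : ℝ) (hδpos : 0 < δ)
    (hδr : ∀ i : Fin n, (i : ℕ) + 1 = (r : ℕ) → δ ≤ lam i - lam r)
    (hδs : ∀ i : Fin n, (i : ℕ) = (s : ℕ) + 1 → δ ≤ lam s - lam i)
    (U tU : Matrix (Fin n) {i : Fin n // r ≤ i ∧ i ≤ s} ℝ)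
    (hU : Uᵀ * U = 1) (htU : tUᵀ * tU = 1)
    (hUeig : ∀ i : {i : Fin n // r ≤ i ∧ i ≤ s}, M.mulVec (Uᵀ i) = lam i.1 • Uᵀ i)
    (htUeig : ∀ i : {i : Fin n // r ≤ i ∧ i ≤ s},
      (M + H).mulVec (tUᵀ i) = tlam i.1 • tUᵀ i) :
    Real.sqrt ((((s : ℕ) - (r : ℕ) + 1 : ℕ) : ℝ) - ∑ i, ∑ j, ((Uᵀ * tU) i j) ^ 2) ≤
      2 * Real.sqrt (((s : ℕ) - (r : ℕ) + 1 : ℕ)) * specNorm H / δ := by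
  obtain ⟨b, hb⟩ := exists_isEigenbasis_of_mulVec_eq_smul hMspec
  obtain ⟨c, hc⟩ := exists_isEigenbasis_of_mulVec_eq_smul hMHspec
  have hbound := davis_kahan_statisticians_general (S := {i | r ≤ i ∧ i ≤ s}) hb hc hlam htlam hδpos
    (le_abs_sub_of_gap_Icc hlam hδr hδs) (orthonormal_col_iff.mpr hU)
    (orthonormal_col_iff.mpr htU).norm_eq_one
    (fun i => toEuclideanCLM_toLp_eq_smul_iff.mpr (hUeig i))
    (fun j => toEuclideanCLM_toLp_eq_smul_iff.mpr (htUeig j))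
  have hcard : (s : ℕ) - r + 1 = Fintype.card {i | r ≤ i ∧ i ≤ s} := by
    rw [← Nat.sub_add_comm hrs, ← Fin.card_Icc, ← Fintype.card_Icc]
    exact Fintype.card_congr (Equiv.refl _)
  have hnorm : specNorm H = ‖toEuclideanCLM (𝕜 := ℝ) (M + H) - toEuclideanCLM (𝕜 := ℝ) M‖ := by
    rw [specNorm, ← map_sub, add_sub_cancel_left]
  simp_rw [hcard, hnorm, ← conjTranspose_eq_transpose_of_trivial U,
    conjTranspose_mul_apply_eq_inner, ← sq_abs ⟪_, _⟫_ℝ, ← Real.norm_eq_abs]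
  convert! hbound
end

section
/- Let M and H be n×n real symmetric matrices with eigenvalues λ_1 ≥ ⋯ ≥ λ_n for M and λ̃_1 ≥ ⋯ ≥ λ̃_n for M+H, and let ṽ^(1), …, ṽ^(n) be an orthonormal basis of ℝ^n with (M+H) ṽ^(i) = λ̃_i ṽ^(i). For each s let Λ_s = { i : λ_i = λ_s }, d_s = |Λ_s|, and δ_s = min_{i ∉ Λ_s} |λ_s − λ_i|. Then there exists an orthonormal basis v^(1), …, v^(n) of ℝ^n with M v^(s) = λ_s v^(s) such that for every t: √(1 − ⟨ṽ^(t), v^(t)⟩²) ≤ 2 √(2 d_t) · ‖H‖ / δ_t, and for every s ≠ t with λ_s ≠ λ_t: |⟨ṽ^(t), v^(s)⟩| ≤ 2 √2 · ‖H‖ · min( √(d_s)/δ_s , √(d_t)/δ_t ). -/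
/-!
Let `P` project onto the eigenspace of `M` at `λ_t`. Since the residual `(M - λ_t) ṽ_t` equals
`(λ̃_t - λ_t) ṽ_t - H ṽ_t`, Weyl's inequality bounds its norm by `2 ‖H‖`; on the other hand its norm
is at least `δ_t ‖ṽ_t - P ṽ_t‖`.

To choose `v`, restrict `P` to the span of the `ṽ_i` with `λ_i = λ_t` and let `Q` be the unitary
polar factor of this contraction. All its singular values `σ` satisfy `σ² ≤ σ`, so
`‖P ṽ_t‖² ≤ ⟨ṽ_t, Q ṽ_t⟩`. Putting `v_t = Q ṽ_t` therefore gives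
`‖ṽ_t - v_t‖² ≤ 2 ‖ṽ_t - P ṽ_t‖²`, and both angle bounds are consequences of the resulting estimate
`‖ṽ_t - v_t‖ ≤ 2 √2 ‖H‖ / δ_t`.
-/

open Matrix

/-- `d_s = |Λ_s|`, the multiplicity of the eigenvalue `λ_s`. -/
noncomputable def eigMult {n : ℕ} (lam : Fin n → ℝ) (s : Fin n) : ℕ :=
  Nat.card {i : Fin n // lam i = lam s}

/-- `δ_s = min_{i ∉ Λ_s} |λ_s - λ_i|`, the gap between `λ_s` and the nearest
distinct eigenvalue. -/
noncomputable def eigGap {n : ℕ} (lam : Fin n → ℝ) (s : Fin n) : ℝ :=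
  sInf {x : ℝ | ∃ i, lam i ≠ lam s ∧ x = |lam s - lam i|}

open Module Submodule
open scoped InnerProductSpace

section InnerProductSpace

variable {ι 𝕜 E F : Type*} [RCLike 𝕜]
  [NormedAddCommGroup E] [InnerProductSpace 𝕜 E] [NormedAddCommGroup F] [InnerProductSpace 𝕜 F]

theorem sqrt_one_sub_norm_inner_sq_le_norm_sub {x y : E} (hx : ‖x‖ = 1) (hy : ‖y‖ = 1) :
    √(1 - ‖⟪x, y⟫_𝕜‖ ^ 2) ≤ ‖x - y‖ := by
  refine Real.sqrt_le_iff.mpr ⟨norm_nonneg _, ?_⟩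
  rw [norm_sub_sq (𝕜 := 𝕜), hx, hy]
  have hre : RCLike.re ⟪x, y⟫_𝕜 ^ 2 ≤ ‖⟪x, y⟫_𝕜‖ ^ 2 :=
    sq_le_sq.mpr ((RCLike.abs_re_le_norm _).trans (le_abs_self _))
  linarith [sq_nonneg (1 - RCLike.re ⟪x, y⟫_𝕜)]

theorem norm_inner_le_norm_sub_left {x y z : E} (hy : ‖y‖ = 1) (hzy : ⟪z, y⟫_𝕜 = 0) :
    ‖⟪x, y⟫_𝕜‖ ≤ ‖x - z‖ := by
  simpa [inner_sub_left, hzy, hy] using norm_inner_le_norm (𝕜 := 𝕜) (x - z) y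

theorem norm_inner_le_min_norm_sub {u v : ι → E} (hu : Orthonormal 𝕜 u)
    (hv : Orthonormal 𝕜 v) {s t : ι} (hst : s ≠ t) :
    ‖⟪u t, v s⟫_𝕜‖ ≤ min ‖u s - v s‖ ‖u t - v t‖ := by
  refine le_min ?_ (norm_inner_le_norm_sub_left (hv.1 s) (hv.2 hst.symm))
  rw [norm_inner_symm, norm_sub_rev]
  exact norm_inner_le_norm_sub_left (hu.1 t) (hu.2 hst)

theorem norm_sub_le_sqrt_two_mul_of_norm_starProjection_sq_le (K : Submodule 𝕜 E)
    [K.HasOrthogonalProjection] {x y : E} (hx : ‖x‖ = 1) (hy : ‖y‖ = 1)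
    (h : ‖K.starProjection x‖ ^ 2 ≤ RCLike.re ⟪x, y⟫_𝕜) :
    ‖x - y‖ ≤ √2 * ‖x - K.starProjection x‖ := by
  have hpyth := K.norm_sq_eq_add_norm_sq_starProjection x
  rw [starProjection_orthogonal_val] at hpyth
  refine le_of_sq_le_sq ?_ (by positivity)
  rw [norm_sub_sq (𝕜 := 𝕜), mul_pow, Real.sq_sqrt zero_le_two, hy]
  rw [hx] at hpyth ⊢
  linarith

theorem exists_orthonormalBasis_coe_eq [FiniteDimensional 𝕜 E] [Fintype ι] {v : ι → E}
    (hv : Orthonormal 𝕜 v) (hcard : finrank 𝕜 E = Fintype.card ι) :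
    ∃ b : OrthonormalBasis ι 𝕜 E, ⇑b = v := by
  obtain ⟨b, hb⟩ := (hv.comp _ Subtype.val_injective).exists_orthonormalBasis_extension_of_card_eq
    (s := Set.univ) hcard
  exact ⟨b, funext fun i => hb i trivial⟩

theorem inner_map_eq_mul_inner {L : Type*} [FunLike L E F] [LinearMapClass L 𝕜 E F] [Fintype ι]
    (b : OrthonormalBasis ι 𝕜 E) {c : ι → F} (hc : Orthonormal 𝕜 c) {A : L} {σ : ι → 𝕜}
    (hA : ∀ i, A (b i) = σ i • c i) (x : E) (i : ι) :
    ⟪c i, A x⟫_𝕜 = σ i * ⟪b i, x⟫_𝕜 := by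
  classical
  conv_lhs => rw [← b.sum_repr' x]
  simp [inner_sum, inner_smul_right, hA, orthonormal_iff_ite.mp hc, mul_comm]

end InnerProductSpace

section Alignment

variable {ι κ 𝕜 E F : Type*} [RCLike 𝕜]
  [NormedAddCommGroup E] [InnerProductSpace 𝕜 E] [NormedAddCommGroup F] [InnerProductSpace 𝕜 F]

theorem exists_singular_value_decomposition [FiniteDimensional 𝕜 E] [FiniteDimensional 𝕜 F]
    (A : E →ₗ[𝕜] F) (hEF : finrank 𝕜 E = finrank 𝕜 F) :
    ∃ (b : OrthonormalBasis (Fin (finrank 𝕜 E)) 𝕜 E)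
      (c : OrthonormalBasis (Fin (finrank 𝕜 E)) 𝕜 F),
      ∀ i, A (b i) = (‖A (b i)‖ : 𝕜) • c i := by
  let b := A.isSymmetric_adjoint_comp_self.eigenvectorBasis rfl
  have horth : Pairwise fun i j => ⟪A (b i), A (b j)⟫_𝕜 = 0 := fun i j hij => by
    have heig : A.adjoint (A (b j)) =
        (A.isSymmetric_adjoint_comp_self.eigenvalues rfl j : 𝕜) • b j :=
      A.isSymmetric_adjoint_comp_self.apply_eigenvectorBasis rfl j
    beta_reduce
    rw [← A.adjoint_inner_right, heig, inner_smul_right, b.orthonormal.2 hij, mul_zero]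
  have hcard : finrank 𝕜 F = Fintype.card (Fin (finrank 𝕜 E)) := by simp [hEF]
  refine ⟨b, InnerProductSpace.gramSchmidtOrthonormalBasis hcard fun i => A (b i), fun i => ?_⟩
  by_cases hi : A (b i) = 0
  · simp [hi]
  · rw [InnerProductSpace.gramSchmidtOrthonormalBasis_apply_of_orthogonal hcard horth hi,
      smul_inv_smul₀ (by simpa using hi)]

theorem exists_linearIsometryEquiv_norm_sq_le_re_inner [FiniteDimensional 𝕜 E]
    [FiniteDimensional 𝕜 F] (A : E →ₗ[𝕜] F) (hEF : finrank 𝕜 E = finrank 𝕜 F)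
    (hA : ∀ x, ‖A x‖ ≤ ‖x‖) :
    ∃ Q : E ≃ₗᵢ[𝕜] F, ∀ x, ‖A x‖ ^ 2 ≤ RCLike.re ⟪A x, Q x⟫_𝕜 := by
  obtain ⟨b, c, hbc⟩ := exists_singular_value_decomposition A hEF
  -- `Q` is the unitary factor of the polar decomposition of `A`.
  let Q := b.equiv c (Equiv.refl _)
  refine ⟨Q, fun x => ?_⟩
  have hAx := inner_map_eq_mul_inner b c.orthonormal hbc x
  have hQx := inner_map_eq_mul_inner (A := Q) (σ := 1) b c.orthonormal (fun i => by simp [Q]) x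
  rw [← c.sum_sq_norm_inner_right, ← c.sum_inner_mul_inner, map_sum]
  refine Finset.sum_le_sum fun i _ => ?_
  have hσ : ‖A (b i)‖ ≤ 1 := by simpa using hA (b i)
  calc ‖⟪c i, A x⟫_𝕜‖ ^ 2 = ‖A (b i)‖ ^ 2 * ‖⟪b i, x⟫_𝕜‖ ^ 2 := by simp [hAx, mul_pow]
    _ ≤ ‖A (b i)‖ * ‖⟪b i, x⟫_𝕜‖ ^ 2 := by
      gcongr
      exact pow_le_of_le_one (norm_nonneg _) hσ two_ne_zero
    _ = RCLike.re (⟪A x, c i⟫_𝕜 * ⟪c i, Q x⟫_𝕜) := by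
      rw [← inner_conj_symm (A x) (c i), hAx, hQx]
      simp only [map_mul, RCLike.conj_ofReal, Pi.one_apply, one_mul, mul_assoc, RCLike.conj_mul]
      norm_cast

/-- The span of the vectors `w i` whose label `μ i` is `c`. When `w` is an eigenbasis with
eigenvalues `μ`, this is the eigenspace of `c`; no operator is needed to define it. -/
def levelSpan (𝕜 : Type*) {ι κ E : Type*} [RCLike 𝕜] [NormedAddCommGroup E]
    [InnerProductSpace 𝕜 E] (w : ι → E) (μ : ι → κ) (c : κ) : Submodule 𝕜 E :=
  span 𝕜 (Set.range fun i : {i // μ i = c} => w i)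

instance levelSpan.finiteDimensional [Finite ι] (w : ι → E) (μ : ι → κ) (c : κ) :
    FiniteDimensional 𝕜 (levelSpan 𝕜 w μ c) :=
  FiniteDimensional.span_of_finite 𝕜 (Set.finite_range _)

theorem mem_levelSpan (w : ι → E) (μ : ι → κ) (i : ι) : w i ∈ levelSpan 𝕜 w μ (μ i) :=
  subset_span ⟨⟨i, rfl⟩, rfl⟩

theorem levelSpan_isOrtho {w : ι → E} (hw : Orthonormal 𝕜 w) (μ : ι → κ) {c d : κ} (hcd : c ≠ d) :
    levelSpan 𝕜 w μ c ⟂ levelSpan 𝕜 w μ d := by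
  refine isOrtho_span.mpr ?_
  rintro _ ⟨⟨i, rfl⟩, rfl⟩ _ ⟨⟨j, rfl⟩, rfl⟩
  exact hw.2 fun hij => hcd (congrArg μ hij)

theorem finrank_levelSpan [Finite ι] {w : ι → E} (hw : Orthonormal 𝕜 w) (μ : ι → κ) (c : κ) :
    finrank 𝕜 (levelSpan 𝕜 w μ c) = Nat.card {i // μ i = c} := by
  have := Fintype.ofFinite {i // μ i = c}
  exact (finrank_span_eq_card (hw.comp _ Subtype.val_injective).linearIndependent).trans
    Nat.card_eq_fintype_card.symm

theorem exists_linearIsometryEquiv_norm_starProjection_sq_le_re_inner (K L : Submodule 𝕜 E)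
    [FiniteDimensional 𝕜 K] [FiniteDimensional 𝕜 L] (hKL : finrank 𝕜 K = finrank 𝕜 L) :
    ∃ Q : K ≃ₗᵢ[𝕜] L, ∀ x : K, ‖L.starProjection x‖ ^ 2 ≤ RCLike.re ⟪(x : E), Q x⟫_𝕜 := by
  obtain ⟨Q, hQ⟩ := exists_linearIsometryEquiv_norm_sq_le_re_inner
    (L.orthogonalProjectionOnto ∘L K.subtypeL).toLinearMap hKL
    fun x => L.norm_orthogonalProjectionOnto_apply_le x
  refine ⟨Q, fun x => ?_⟩
  rw [← L.inner_orthogonalProjectionOnto_eq_of_mem_right]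
  exact hQ x

theorem exists_orthonormal_norm_starProjection_sq_le_re_inner [Finite ι] {u w : ι → E}
    (hu : Orthonormal 𝕜 u) (hw : Orthonormal 𝕜 w) (μ : ι → κ) :
    ∃ v : ι → E, Orthonormal 𝕜 v ∧ (∀ i, v i ∈ levelSpan 𝕜 w μ (μ i)) ∧
      ∀ i, ‖(levelSpan 𝕜 w μ (μ i)).starProjection (u i)‖ ^ 2 ≤ RCLike.re ⟪u i, v i⟫_𝕜 := by
  choose Q hQ using fun c =>
    exists_linearIsometryEquiv_norm_starProjection_sq_le_re_inner
      (levelSpan 𝕜 u μ c) (levelSpan 𝕜 w μ c)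
      ((finrank_levelSpan hu μ c).trans (finrank_levelSpan hw μ c).symm)
  let v (i : ι) : E := Q (μ i) ⟨u i, mem_levelSpan u μ i⟩
  have hmem (i : ι) : v i ∈ levelSpan 𝕜 w μ (μ i) := SetLike.coe_mem _
  have hv_eq {c : κ} {j : ι} (hj : u j ∈ levelSpan 𝕜 u μ c) (h : μ j = c) :
      v j = Q c ⟨u j, hj⟩ := by subst h; rfl
  have horth {i j : ι} (hij : i ≠ j) : ⟪v i, v j⟫_𝕜 = 0 := by
    by_cases hμ : μ i = μ j
    · have huj : u j ∈ levelSpan 𝕜 u μ (μ i) := hμ ▸ mem_levelSpan u μ j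
      rw [hv_eq huj hμ.symm, ← coe_inner, LinearIsometryEquiv.inner_map_map, coe_inner]
      exact hu.2 hij
    · exact (levelSpan_isOrtho hw μ hμ).inner_eq (hmem i) (hmem j)
  exact ⟨v, ⟨fun i => ((Q (μ i)).norm_map _).trans (hu.1 i), fun _ _ => horth⟩, hmem,
    fun i => hQ (μ i) ⟨u i, mem_levelSpan u μ i⟩⟩

end Alignment

section Perturbation

section Eigenbasis

variable {ι 𝕜 E L : Type*} [RCLike 𝕜] [NormedAddCommGroup E] [InnerProductSpace 𝕜 E]
  [FunLike L E E] [LinearMapClass L 𝕜 E E] {T : L}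

theorem map_eq_smul_of_mem_levelSpan {κ : Type*} {w : ι → E} {μ : ι → κ} {f : κ → 𝕜}
    (hw : ∀ i, T (w i) = f (μ i) • w i) {c : κ} {x : E} (hx : x ∈ levelSpan 𝕜 w μ c) :
    T x = f c • x := by
  suffices levelSpan 𝕜 w μ c ≤ End.eigenspace (T : E →ₗ[𝕜] E) (f c) from
    End.mem_eigenspace_iff.mp (this hx)
  refine span_le.mpr ?_
  rintro _ ⟨⟨i, rfl⟩, rfl⟩
  exact End.mem_eigenspace_iff.mpr (hw i)

variable [Fintype ι]

theorem mul_norm_le_norm_map_sub_smul (w : OrthonormalBasis ι 𝕜 E) {μ : ι → 𝕜}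
    (hw : ∀ i, T (w i) = μ i • w i) {c : 𝕜} {δ : ℝ} (hδ : 0 ≤ δ) {x : E}
    (hx : ∀ i, ⟪w i, x⟫_𝕜 ≠ 0 → δ ≤ ‖μ i - c‖) :
    δ * ‖x‖ ≤ ‖T x - c • x‖ := by
  refine le_of_sq_le_sq ?_ (norm_nonneg _)
  rw [mul_pow, ← w.sum_sq_norm_inner_right, ← w.sum_sq_norm_inner_right, Finset.mul_sum]
  refine Finset.sum_le_sum fun i _ => ?_
  rw [inner_sub_right, inner_smul_right, inner_map_eq_mul_inner w w.orthonormal hw, ← sub_mul,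
    norm_mul, mul_pow]
  by_cases hi : ⟪w i, x⟫_𝕜 = 0
  · simp [hi]
  · gcongr
    exact hx i hi

theorem re_inner_map_self_eq_sum (w : OrthonormalBasis ι 𝕜 E) {μ : ι → ℝ}
    (hw : ∀ i, T (w i) = (μ i : 𝕜) • w i) (x : E) :
    RCLike.re ⟪x, T x⟫_𝕜 = ∑ i, μ i * ‖⟪w i, x⟫_𝕜‖ ^ 2 := by
  rw [← w.sum_inner_mul_inner, map_sum]
  refine Finset.sum_congr rfl fun i _ => ?_
  rw [inner_map_eq_mul_inner w w.orthonormal hw, mul_left_comm, ← inner_conj_symm x,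
    RCLike.conj_mul, RCLike.re_ofReal_mul]
  norm_cast

theorem mul_norm_sq_le_re_inner_map_self (w : OrthonormalBasis ι 𝕜 E) {μ : ι → ℝ}
    (hw : ∀ i, T (w i) = (μ i : 𝕜) • w i) {c : ℝ} {x : E} (hx : ∀ i, ⟪w i, x⟫_𝕜 ≠ 0 → c ≤ μ i) :
    c * ‖x‖ ^ 2 ≤ RCLike.re ⟪x, T x⟫_𝕜 := by
  rw [re_inner_map_self_eq_sum w hw, ← w.sum_sq_norm_inner_right, Finset.mul_sum]
  refine Finset.sum_le_sum fun i _ => ?_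
  by_cases hi : ⟪w i, x⟫_𝕜 = 0
  · simp [hi]
  · gcongr
    exact hx i hi

theorem re_inner_map_self_le_mul_norm_sq (w : OrthonormalBasis ι 𝕜 E) {μ : ι → ℝ}
    (hw : ∀ i, T (w i) = (μ i : 𝕜) • w i) {c : ℝ} {x : E} (hx : ∀ i, ⟪w i, x⟫_𝕜 ≠ 0 → μ i ≤ c) :
    RCLike.re ⟪x, T x⟫_𝕜 ≤ c * ‖x‖ ^ 2 := by
  rw [re_inner_map_self_eq_sum w hw, ← w.sum_sq_norm_inner_right, Finset.mul_sum]
  refine Finset.sum_le_sum fun i _ => ?_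
  by_cases hi : ⟪w i, x⟫_𝕜 = 0
  · simp [hi]
  · gcongr
    exact hx i hi

end Eigenbasis

variable {ι 𝕜 E : Type*} [RCLike 𝕜] [NormedAddCommGroup E] [InnerProductSpace 𝕜 E]
  [Fintype ι] [LinearOrder ι]

theorem exists_ne_zero_inner_eq_zero (hcard : Fintype.card ι ≤ finrank 𝕜 E) (u w : ι → E) (i : ι) :
    ∃ x ≠ 0, (∀ j < i, ⟪u j, x⟫_𝕜 = 0) ∧ ∀ j > i, ⟪w j, x⟫_𝕜 = 0 := by
  let L : E →ₗ[𝕜] {j // j ≠ i} → 𝕜 :=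
    LinearMap.pi fun j => innerₛₗ 𝕜 (if (j : ι) < i then u j else w j)
  have hlt : finrank 𝕜 ({j // j ≠ i} → 𝕜) < finrank 𝕜 E := by
    rw [finrank_fintype_fun_eq_card]
    exact (Fintype.card_subtype_lt (x := i) (by simp)).trans_le hcard
  have : FiniteDimensional 𝕜 E := .of_finrank_pos (Nat.zero_lt_of_lt hlt)
  obtain ⟨x, hx, hx0⟩ := (Submodule.ne_bot_iff L.ker).mp (LinearMap.ker_ne_bot_of_finrank_lt hlt)
  have hL (j : ι) (hj : j ≠ i) : ⟪if j < i then u j else w j, x⟫_𝕜 = 0 :=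
    congrFun (LinearMap.mem_ker.mp hx) ⟨j, hj⟩
  exact ⟨x, hx0, fun j hj => by simpa [hj] using hL j hj.ne,
    fun j hj => by simpa [hj.not_gt] using hL j hj.ne'⟩

variable {T S : E →L[𝕜] E} {w u : OrthonormalBasis ι 𝕜 E}
  {lam tlam : ι → ℝ}

theorem eigenvalue_le_add_norm_sub (hlam : Antitone lam) (htlam : Antitone tlam)
    (hw : ∀ i, T (w i) = (lam i : 𝕜) • w i) (hu : ∀ i, S (u i) = (tlam i : 𝕜) • u i) (i : ι) :
    lam i ≤ tlam i + ‖S - T‖ := by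
  obtain ⟨x, hx0, hux, hwx⟩ := exists_ne_zero_inner_eq_zero (𝕜 := 𝕜)
    (finrank_eq_card_basis w.toBasis).ge u w i
  have hT : lam i * ‖x‖ ^ 2 ≤ RCLike.re ⟪x, T x⟫_𝕜 :=
    mul_norm_sq_le_re_inner_map_self w hw fun j hj => hlam (not_lt.mp fun hij => hj (hwx j hij))
  have hS : RCLike.re ⟪x, S x⟫_𝕜 ≤ tlam i * ‖x‖ ^ 2 :=
    re_inner_map_self_le_mul_norm_sq u hu fun j hj => htlam (not_lt.mp fun hji => hj (hux j hji))
  have hdiff : RCLike.re ⟪x, T x⟫_𝕜 - RCLike.re ⟪x, S x⟫_𝕜 ≤ ‖S - T‖ * ‖x‖ ^ 2 := by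
    calc RCLike.re ⟪x, T x⟫_𝕜 - RCLike.re ⟪x, S x⟫_𝕜 = RCLike.re ⟪x, (T - S) x⟫_𝕜 := by
          simp [inner_sub_right]
      _ ≤ ‖x‖ * ‖(T - S) x‖ := re_inner_le_norm _ _
      _ ≤ ‖x‖ * (‖T - S‖ * ‖x‖) := by gcongr; exact (T - S).le_opNorm x
      _ = ‖S - T‖ * ‖x‖ ^ 2 := by rw [norm_sub_rev]; ring
  have hpos : 0 < ‖x‖ ^ 2 := by positivity
  exact le_of_mul_le_mul_right (by linarith) hpos

theorem abs_eigenvalue_sub_le_norm_sub (hlam : Antitone lam) (htlam : Antitone tlam)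
    (hw : ∀ i, T (w i) = (lam i : 𝕜) • w i) (hu : ∀ i, S (u i) = (tlam i : 𝕜) • u i) (i : ι) :
    |tlam i - lam i| ≤ ‖S - T‖ := by
  have hle := eigenvalue_le_add_norm_sub hlam htlam hw hu i
  have hge := eigenvalue_le_add_norm_sub htlam hlam hu hw i
  rw [norm_sub_rev] at hge
  exact abs_le.mpr ⟨by linarith, by linarith⟩

theorem norm_map_sub_smul_le_two_mul_norm_sub (hlam : Antitone lam) (htlam : Antitone tlam)
    (hw : ∀ i, T (w i) = (lam i : 𝕜) • w i) (hu : ∀ i, S (u i) = (tlam i : 𝕜) • u i) (i : ι) :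
    ‖T (u i) - (lam i : 𝕜) • u i‖ ≤ 2 * ‖S - T‖ := by
  have hsplit : T (u i) - (lam i : 𝕜) • u i =
      ((tlam i - lam i : ℝ) : 𝕜) • u i - (S - T) (u i) := by
    rw [_root_.sub_apply, hu, RCLike.ofReal_sub, sub_smul]
    abel
  calc ‖T (u i) - (lam i : 𝕜) • u i‖ ≤ |tlam i - lam i| * ‖u i‖ + ‖S - T‖ * ‖u i‖ := by
        rw [hsplit]
        refine (norm_sub_le _ _).trans (add_le_add ?_ ((S - T).le_opNorm _))
        rw [norm_smul, RCLike.norm_ofReal]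
    _ ≤ 2 * ‖S - T‖ := by
      rw [u.norm_eq_one]
      linarith [abs_eigenvalue_sub_le_norm_sub hlam htlam hw hu i]

end Perturbation

section EigGap

variable {n : ℕ} (lam : Fin n → ℝ)

theorem eigGap_nonneg (s : Fin n) : 0 ≤ eigGap lam s :=
  Real.sInf_nonneg (by rintro _ ⟨i, -, rfl⟩; exact abs_nonneg _)

variable {lam}

theorem eigGap_le {s i : Fin n} (h : lam i ≠ lam s) : eigGap lam s ≤ |lam i - lam s| :=
  csInf_le ⟨0, by rintro _ ⟨j, -, rfl⟩; exact abs_nonneg _⟩ ⟨i, h, abs_sub_comm _ _⟩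

theorem eigGap_pos {s i : Fin n} (h : lam i ≠ lam s) : 0 < eigGap lam s := by
  have hfin : {x : ℝ | ∃ i, lam i ≠ lam s ∧ x = |lam s - lam i|}.Finite :=
    (Set.finite_range fun i => |lam s - lam i|).subset (by rintro _ ⟨j, -, rfl⟩; exact ⟨j, rfl⟩)
  have hne : {x : ℝ | ∃ i, lam i ≠ lam s ∧ x = |lam s - lam i|}.Nonempty := ⟨_, i, h, rfl⟩
  obtain ⟨j, hj, hgap⟩ := hne.csInf_mem hfin
  rw [eigGap, hgap]
  exact abs_pos.mpr (sub_ne_zero.mpr hj.symm)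

theorem div_eigGap_le_mul_sqrt_eigMult_div_eigGap {a : ℝ} (ha : 0 ≤ a) (s : Fin n) :
    a / eigGap lam s ≤ a * (√(eigMult lam s) / eigGap lam s) := by
  have : Nonempty {i // lam i = lam s} := ⟨s, rfl⟩
  have hmult : 1 ≤ √(eigMult lam s) :=
    Real.one_le_sqrt.mpr (Nat.one_le_cast.mpr Nat.card_pos)
  rw [← mul_div_assoc]
  exact div_le_div_of_nonneg_right (le_mul_of_one_le_right ha hmult) (eigGap_nonneg lam s)

end EigGap

section DavisKahan

variable {𝕜 E : Type*} [RCLike 𝕜] [NormedAddCommGroup E] [InnerProductSpace 𝕜 E] {n : ℕ}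
  {lam tlam : Fin n → ℝ} {T S : E →L[𝕜] E} {w u : OrthonormalBasis (Fin n) 𝕜 E}

theorem norm_le_norm_map_sub_smul_div_eigGap (hw : ∀ i, T (w i) = (lam i : 𝕜) • w i) {s : Fin n}
    {x : E} (hx : x ∈ (levelSpan 𝕜 w lam (lam s))ᗮ) :
    ‖x‖ ≤ ‖T x - (lam s : 𝕜) • x‖ / eigGap lam s := by
  have hne (i : Fin n) (hi : ⟪w i, x⟫_𝕜 ≠ 0) : lam i ≠ lam s := fun h =>
    hi (hx _ (h ▸ mem_levelSpan (⇑w) lam i))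
  -- If `lam` is constant then `eigGap lam s = sInf ∅ = 0`, but in that case `x = 0`.
  by_cases h0 : x = 0
  · simp [h0]
  obtain ⟨i, hi⟩ : ∃ i, ⟪w i, x⟫_𝕜 ≠ 0 := by
    by_contra! h
    have hx0 := w.sum_repr' x
    simp only [h, zero_smul, Finset.sum_const_zero] at hx0
    exact h0 hx0.symm
  rw [le_div_iff₀' (eigGap_pos (hne i hi))]
  refine mul_norm_le_norm_map_sub_smul w hw (eigGap_nonneg lam s)
    fun j hj => ?_
  rw [← RCLike.ofReal_sub, RCLike.norm_ofReal]
  exact eigGap_le (hne j hj)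

theorem norm_sub_starProjection_le_two_mul_norm_sub_div_eigGap (hlam : Antitone lam)
    (htlam : Antitone tlam)
    (hw : ∀ i, T (w i) = (lam i : 𝕜) • w i) (hu : ∀ i, S (u i) = (tlam i : 𝕜) • u i) (t : Fin n) :
    ‖u t - (levelSpan 𝕜 w lam (lam t)).starProjection (u t)‖ ≤
      2 * ‖S - T‖ / eigGap lam t := by
  set K := levelSpan 𝕜 w lam (lam t)
  have hres : T (u t - K.starProjection (u t)) - (lam t : 𝕜) • (u t - K.starProjection (u t)) =
      T (u t) - (lam t : 𝕜) • u t := by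
    have hK : T (K.starProjection (u t)) = (lam t : 𝕜) • K.starProjection (u t) :=
      map_eq_smul_of_mem_levelSpan (f := RCLike.ofReal) hw (K.starProjection_apply_mem _)
    rw [map_sub, smul_sub, hK]
    abel
  refine (norm_le_norm_map_sub_smul_div_eigGap hw (sub_starProjection_mem_orthogonal _)).trans ?_
  rw [hres]
  exact div_le_div_of_nonneg_right (norm_map_sub_smul_le_two_mul_norm_sub hlam htlam hw hu t)
    (eigGap_nonneg lam t)

theorem exists_eigenbasis_norm_sub_le (hlam : Antitone lam) (htlam : Antitone tlam)
    (hw : ∀ i, T (w i) = (lam i : 𝕜) • w i) (hu : ∀ i, S (u i) = (tlam i : 𝕜) • u i) :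
    ∃ v : OrthonormalBasis (Fin n) 𝕜 E, (∀ s, T (v s) = (lam s : 𝕜) • v s) ∧
      ∀ t, ‖u t - v t‖ ≤ 2 * √2 * ‖S - T‖ / eigGap lam t := by
  have : FiniteDimensional 𝕜 E := w.toBasis.finiteDimensional_of_finite
  obtain ⟨v, hv, hmem, halign⟩ :=
    exists_orthonormal_norm_starProjection_sq_le_re_inner u.orthonormal w.orthonormal lam
  obtain ⟨v, rfl⟩ := exists_orthonormalBasis_coe_eq hv (finrank_eq_card_basis w.toBasis)
  refine ⟨v, fun s => map_eq_smul_of_mem_levelSpan (f := RCLike.ofReal) hw (hmem s), fun t => ?_⟩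
  calc ‖u t - v t‖ ≤ √2 * ‖u t - (levelSpan 𝕜 w lam (lam t)).starProjection (u t)‖ :=
        norm_sub_le_sqrt_two_mul_of_norm_starProjection_sq_le _ (u.norm_eq_one t)
          (v.norm_eq_one t) (halign t)
    _ ≤ √2 * (2 * ‖S - T‖ / eigGap lam t) := by
      gcongr
      exact norm_sub_starProjection_le_two_mul_norm_sub_div_eigGap hlam htlam hw hu t
    _ = 2 * √2 * ‖S - T‖ / eigGap lam t := by ring

theorem aligned_eigenbasis_davis_kahan_general (hlam : Antitone lam) (htlam : Antitone tlam)
    (hw : ∀ i, T (w i) = (lam i : 𝕜) • w i) (hu : ∀ i, S (u i) = (tlam i : 𝕜) • u i) :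
    ∃ v : OrthonormalBasis (Fin n) 𝕜 E, (∀ s, T (v s) = (lam s : 𝕜) • v s) ∧
      (∀ t, √(1 - ‖⟪u t, v t⟫_𝕜‖ ^ 2) ≤ 2 * √2 * ‖S - T‖ / eigGap lam t) ∧
      ∀ t s, s ≠ t → ‖⟪u t, v s⟫_𝕜‖ ≤
        min (2 * √2 * ‖S - T‖ / eigGap lam s) (2 * √2 * ‖S - T‖ / eigGap lam t) := by
  obtain ⟨v, hv, hdist⟩ := exists_eigenbasis_norm_sub_le hlam htlam hw hu
  refine ⟨v, hv, fun t => ?_, fun t s hst => ?_⟩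
  · exact (sqrt_one_sub_norm_inner_sq_le_norm_sub (u.norm_eq_one t) (v.norm_eq_one t)).trans
      (hdist t)
  · exact (norm_inner_le_min_norm_sub u.orthonormal v.orthonormal hst).trans
      (min_le_min (hdist s) (hdist t))

end DavisKahan

section Matrix

variable {n : ℕ} {A : Matrix (Fin n) (Fin n) ℝ} {μ : Fin n → ℝ}

theorem exists_orthonormalBasis_toEuclideanCLM_eq_smul {v : Fin n → Fin n → ℝ}
    (hv : ∀ i j, v i ⬝ᵥ v j = if i = j then (1 : ℝ) else 0) (hA : ∀ i, A *ᵥ v i = μ i • v i) :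
    ∃ b : OrthonormalBasis (Fin n) ℝ (EuclideanSpace ℝ (Fin n)),
      v = (fun i => (b i).ofLp) ∧ ∀ i, toEuclideanCLM (𝕜 := ℝ) A (b i) = μ i • b i := by
  have hON : Orthonormal ℝ fun i => WithLp.toLp 2 (v i) :=
    orthonormal_iff_ite.mpr fun i j => by simp [EuclideanSpace.inner_toLp_toLp, dotProduct_comm, hv]
  obtain ⟨b, hb⟩ := exists_orthonormalBasis_coe_eq hON (by simp)
  refine ⟨b, by simp [hb], fun i => ?_⟩
  rw [hb, toEuclideanCLM_toLp, hA, WithLp.toLp_smul]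

theorem ofLp_dotProduct_ofLp (x y : EuclideanSpace ℝ (Fin n)) : x.ofLp ⬝ᵥ y.ofLp = ⟪x, y⟫_ℝ := by
  rw [EuclideanSpace.inner_eq_star_dotProduct, star_trivial, dotProduct_comm]

theorem specNorm_nonneg (A : Matrix (Fin n) (Fin n) ℝ) : 0 ≤ specNorm A :=
  norm_nonneg _

end Matrix

/-- Existence of an orthonormal eigenbasis of `M` aligned with the perturbed
eigenvectors of `M + H`, with Davis–Kahan angle bounds. -/
theorem aligned_eigenbasis_davis_kahan {n : ℕ} (M H : Matrix (Fin n) (Fin n) ℝ)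
    (hM : M.IsSymm) (hH : H.IsSymm)
    (lam tlam : Fin n → ℝ) (hlam : Antitone lam) (htlam : Antitone tlam)
    (tv : Fin n → (Fin n → ℝ))
    (htON : ∀ i j, tv i ⬝ᵥ tv j = if i = j then (1 : ℝ) else 0)
    (hteig : ∀ i, (M + H).mulVec (tv i) = tlam i • tv i)
    (hMspec : ∃ w : Fin n → (Fin n → ℝ),
      (∀ i j, w i ⬝ᵥ w j = if i = j then (1 : ℝ) else 0) ∧
      ∀ i, M.mulVec (w i) = lam i • w i) :
    ∃ v : Fin n → (Fin n → ℝ),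
      (∀ i j, v i ⬝ᵥ v j = if i = j then (1 : ℝ) else 0) ∧
      (∀ s, M.mulVec (v s) = lam s • v s) ∧
      (∀ t, Real.sqrt (1 - (tv t ⬝ᵥ v t) ^ 2) ≤
        2 * Real.sqrt (2 * eigMult lam t) * specNorm H / eigGap lam t) ∧
      (∀ t s, s ≠ t → lam s ≠ lam t →
        |tv t ⬝ᵥ v s| ≤ 2 * Real.sqrt 2 * specNorm H *
          min (Real.sqrt (eigMult lam s) / eigGap lam s)
            (Real.sqrt (eigMult lam t) / eigGap lam t)) := by
  obtain ⟨w, hwON, hweig⟩ := hMspec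
  obtain ⟨w, -, hw⟩ := exists_orthonormalBasis_toEuclideanCLM_eq_smul hwON hweig
  obtain ⟨u, rfl, hu⟩ := exists_orthonormalBasis_toEuclideanCLM_eq_smul htON hteig
  obtain ⟨v, hv, hsin, hcos⟩ := aligned_eigenbasis_davis_kahan_general hlam htlam hw hu
  rw [map_add, add_sub_cancel_left, ← specNorm] at hsin hcos
  have hC : 0 ≤ 2 * √2 * specNorm H := mul_nonneg (by positivity) (specNorm_nonneg H)
  have hgap := div_eigGap_le_mul_sqrt_eigMult_div_eigGap (lam := lam) hC
  refine ⟨fun i => (v i).ofLp, fun i j => ?_, fun s => congrArg WithLp.ofLp (hv s),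
    fun t => ?_, fun t s hst _ => ?_⟩
  · rw [ofLp_dotProduct_ofLp, orthonormal_iff_ite.mp v.orthonormal]
  · calc √(1 - (u t ⬝ᵥ v t) ^ 2) ≤ 2 * √2 * specNorm H / eigGap lam t := by
          simpa [ofLp_dotProduct_ofLp] using hsin t
      _ ≤ 2 * √2 * specNorm H * (√(eigMult lam t) / eigGap lam t) := hgap t
      _ = 2 * √(2 * eigMult lam t) * specNorm H / eigGap lam t := by
        rw [Real.sqrt_mul zero_le_two]; ring
  · rw [ofLp_dotProduct_ofLp, mul_min_of_nonneg _ _ hC]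
    exact (hcos t s hst).trans (min_le_min (hgap s) (hgap t))
end
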